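/- Let n ≥ 1. On the n-qubit space, the matrix ∑_{1 ≤ i < j ≤ n} Π⁻_{ij} − (n/2)·(1 − Π_sym) is positive semidefinite, where Π⁻_{ij} := (1 − SWAP_{ij})/2 and Π_sym is the matrix with entries Π_sym(f, f') = 1/(n choose wt(f)) if wt(f) = wt(f') and 0 otherwise (the projector onto the totally symmetric subspace). -/

import Mathlib

/-!
Let `H = ∑_{i<j} Π⁻_{ij}`. The proof establishes `H² ≥ (n/2) H` and identifies the kernel of `H`
with the symmetric subspace; together they say that every nonzero eigenvalue of `H` is at least
`n/2`.

For the square inequality, expand `H²` as a sum of products `Π⁻_{ij} Π⁻_{kl}`. Products on disjoint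
pairs are products of commuting projections, hence positive semidefinite. Products sharing one site
are computed from the vanishing of the antisymmetrizer on three qubits (`swapOp_cycles`), which
makes the anticommutator of `Π⁻_{ij}` and `Π⁻_{ik}` linear in the projectors (`piMinus_anticomm`);
summed over all triples this contributes exactly the multiple of `H` needed
(`exch_sq_sub_posSemidef`).

If `H v = 0`, every `Π⁻_{ij}` kills `v`, so `v` is invariant under all permutations of the sites.
Bitstrings of equal weight are permutations of each other, so `v` depends only on the weight and is
fixed by `Π_sym` (`symProj_mulVec_of_exch_mulVec`).

Finally let `v` be an eigenvector of `H - (n/2)(1 - Π_sym)` with eigenvalue `t < 0`. Since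
`Π_sym H = 0`, applying `Π_sym` gives `Π_sym v = 0`, so `H v = (t + n/2) v`. An eigenvalue of `H`
below `n/2` must vanish, which forces `v = Π_sym v = 0`.
-/

open Matrix BigOperators
open scoped ComplexOrder

noncomputable section

/-- The space of `n`-qubit operators. -/
abbrev QOp (n : ℕ) := Matrix ((Fin n) → Fin 2) ((Fin n) → Fin 2) ℂ

/-- The Hamming weight of a bitstring. -/
def wt {n : ℕ} (f : Fin n → Fin 2) : ℕ :=
  (Finset.univ.filter (fun i => f i = 1)).card

/-- The SWAP operator exchanging sites `i` and `j`. -/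
def swapOp {n : ℕ} (i j : Fin n) : QOp n := fun f f' =>
  if f' = f ∘ (Equiv.swap i j) then 1 else 0

/-- The projector onto the antisymmetric subspace of the pair `(i, j)`. -/
def piMinus {n : ℕ} (i j : Fin n) : QOp n :=
  (2⁻¹ : ℂ) • ((1 : QOp n) - swapOp i j)

/-- The projector onto the totally symmetric subspace. -/
def symProj (n : ℕ) : QOp n := fun f f' =>
  if wt f = wt f' then ((n.choose (wt f) : ℂ))⁻¹ else 0

/-! ### Algebra of swaps and antisymmetric projectors -/

theorem swapOp_mul_swapOp {n : ℕ} (i j k l : Fin n) :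
    swapOp i j * swapOp k l =
      (Matrix.of fun f f' => if f' = f ∘ ⇑(Equiv.swap i j * Equiv.swap k l) then 1 else 0 : QOp n) := by
  ext f f'
  simp only [Matrix.mul_apply, swapOp, ite_mul, one_mul, zero_mul]
  rw [Finset.sum_ite_eq']
  simp only [Finset.mem_univ, if_true, Matrix.of_apply, Equiv.Perm.coe_mul, Function.comp_assoc]
  congr

theorem swapOp_self {n : ℕ} (i : Fin n) : swapOp i i = (1 : QOp n) := by
  ext f f'
  simp [swapOp, Matrix.one_apply, eq_comm]

theorem swapOp_comm {n : ℕ} (i j : Fin n) : swapOp i j = (swapOp j i : QOp n) := by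
  ext f f'
  rw [swapOp, swapOp, Equiv.swap_comm]

theorem swapOp_mul_self {n : ℕ} (i j : Fin n) : swapOp i j * swapOp i j = (1 : QOp n) := by
  rw [swapOp_mul_swapOp]
  ext f f'
  simp [Matrix.one_apply, eq_comm]

theorem comp_swap_eq_self {n : ℕ} {f : Fin n → Fin 2} {i j : Fin n} (h : f i = f j) :
    f ∘ Equiv.swap i j = f := by
  ext x
  simp only [Function.comp_apply, Equiv.swap_apply_def]
  split_ifs <;> simp_all

/-- The antisymmetrizer on three distinct qubits vanishes, because two of any three bits agree;
the two products of swaps on the left are the two 3-cycles. -/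
theorem swapOp_cycles {n : ℕ} {i j k : Fin n} (hij : i ≠ j) (hik : i ≠ k) (hjk : j ≠ k) :
    swapOp i j * swapOp i k + swapOp i k * swapOp i j =
      (swapOp i j + swapOp i k + swapOp j k - 1 : QOp n) := by
  have e1 : Equiv.swap i k * Equiv.swap i j = Equiv.swap i j * Equiv.swap j k := by
    rw [Equiv.mul_swap_eq_swap_mul (Equiv.swap i j) j k, Equiv.swap_apply_right,
      Equiv.swap_apply_of_ne_of_ne hik.symm hjk.symm]
  have e2 : Equiv.swap i j * Equiv.swap i k = Equiv.swap i k * Equiv.swap j k := by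
    rw [Equiv.mul_swap_eq_swap_mul (Equiv.swap i k) j k, Equiv.swap_apply_right,
      Equiv.swap_apply_of_ne_of_ne hij.symm hjk, Equiv.swap_comm j i]
  have e3 : Equiv.swap i j * Equiv.swap i k = Equiv.swap j k * Equiv.swap i j := by
    rw [Equiv.mul_swap_eq_swap_mul (Equiv.swap i j) i k, Equiv.swap_apply_left,
      Equiv.swap_apply_of_ne_of_ne hik.symm hjk.symm]
  have e4 : Equiv.swap i k * Equiv.swap i j = Equiv.swap j k * Equiv.swap i k := by
    rw [Equiv.mul_swap_eq_swap_mul (Equiv.swap i k) i j, Equiv.swap_apply_left,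
      Equiv.swap_apply_of_ne_of_ne hij.symm hjk, Equiv.swap_comm k j]
  rw [swapOp_mul_swapOp, swapOp_mul_swapOp]
  ext f f'
  -- Pigeonhole: three bits, two values.
  have key : f i = f j ∨ f i = f k ∨ f j = f k := by omega
  simp only [Matrix.add_apply, Matrix.sub_apply, Matrix.of_apply, swapOp, Matrix.one_apply, eq_comm (a := f)]
  rcases key with h | h | h
  · have h1 : f ∘ ⇑(Equiv.swap i j * Equiv.swap i k) = f ∘ Equiv.swap i k := by
      rw [Equiv.Perm.coe_mul, ← Function.comp_assoc, comp_swap_eq_self h]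
    have h2 : f ∘ ⇑(Equiv.swap i k * Equiv.swap i j) = f ∘ Equiv.swap j k := by
      rw [e1, Equiv.Perm.coe_mul, ← Function.comp_assoc, comp_swap_eq_self h]
    rw [h1, h2, comp_swap_eq_self h]
    ring
  · have h1 : f ∘ ⇑(Equiv.swap i j * Equiv.swap i k) = f ∘ Equiv.swap j k := by
      rw [e2, Equiv.Perm.coe_mul, ← Function.comp_assoc, comp_swap_eq_self h]
    have h2 : f ∘ ⇑(Equiv.swap i k * Equiv.swap i j) = f ∘ Equiv.swap i j := by
      rw [Equiv.Perm.coe_mul, ← Function.comp_assoc, comp_swap_eq_self h]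
    rw [h1, h2, comp_swap_eq_self h]
    ring
  · have h1 : f ∘ ⇑(Equiv.swap i j * Equiv.swap i k) = f ∘ Equiv.swap i j := by
      rw [e3, Equiv.Perm.coe_mul, ← Function.comp_assoc, comp_swap_eq_self h]
    have h2 : f ∘ ⇑(Equiv.swap i k * Equiv.swap i j) = f ∘ Equiv.swap i k := by
      rw [e4, Equiv.Perm.coe_mul, ← Function.comp_assoc, comp_swap_eq_self h]
    rw [h1, h2, comp_swap_eq_self h]
    ring

theorem piMinus_self {n : ℕ} (i : Fin n) : piMinus i i = (0 : QOp n) := by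
  simp [piMinus, swapOp_self]

theorem piMinus_comm {n : ℕ} (i j : Fin n) : piMinus i j = (piMinus j i : QOp n) := by
  rw [piMinus, swapOp_comm, piMinus]

theorem piMinus_mul_self {n : ℕ} (i j : Fin n) :
    piMinus i j * piMinus i j = (piMinus i j : QOp n) := by
  simp only [piMinus, smul_mul_assoc, mul_smul_comm, sub_mul, mul_sub, swapOp_mul_self, one_mul,
    mul_one]
  module

theorem piMinus_conjTranspose {n : ℕ} (i j : Fin n) :
    (piMinus i j : QOp n)ᴴ = piMinus i j := by
  have h : (swapOp i j : QOp n)ᴴ = swapOp i j := by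
    ext f f'
    have : f = f' ∘ Equiv.swap i j ↔ f' = f ∘ Equiv.swap i j := by
      constructor <;> rintro rfl <;> simp [Function.comp_assoc, ← Equiv.Perm.coe_mul]
    simp only [Matrix.conjTranspose_apply, swapOp, this]
    split_ifs <;> simp
  simp [piMinus, h]

theorem piMinus_posSemidef {n : ℕ} (i j : Fin n) : (piMinus i j : QOp n).PosSemidef := by
  have := Matrix.posSemidef_conjTranspose_mul_self (piMinus i j)
  rwa [piMinus_conjTranspose, piMinus_mul_self] at this

/-- The product is a projection, since the two factors act on different sites and commute. -/
theorem piMinus_mul_posSemidef {n : ℕ} {i j k l : Fin n} (hik : i ≠ k) (hil : i ≠ l)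
    (hjk : j ≠ k) (hjl : j ≠ l) : (piMinus i j * piMinus k l : QOp n).PosSemidef := by
  have hs : swapOp i j * swapOp k l = (swapOp k l * swapOp i j : QOp n) := by
    rw [swapOp_mul_swapOp, swapOp_mul_swapOp, Equiv.mul_swap_eq_swap_mul,
      Equiv.swap_apply_of_ne_of_ne hik.symm hjk.symm, Equiv.swap_apply_of_ne_of_ne hil.symm hjl.symm]
  have hc : piMinus i j * piMinus k l = (piMinus k l * piMinus i j : QOp n) := by
    simp only [piMinus, smul_mul_assoc, mul_smul_comm, sub_mul, mul_sub, hs, one_mul, mul_one]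
    module
  have hsq : (piMinus i j * piMinus k l : QOp n)ᴴ * (piMinus i j * piMinus k l) =
      piMinus i j * piMinus k l := by
    rw [Matrix.conjTranspose_mul, piMinus_conjTranspose, piMinus_conjTranspose, mul_assoc,
      ← mul_assoc (piMinus i j), piMinus_mul_self, hc, ← mul_assoc, piMinus_mul_self]
  rw [← hsq]
  exact Matrix.posSemidef_conjTranspose_mul_self _

/-- Anticommutator of two antisymmetric projectors sharing a site. The indicator accounts for the
degenerate case `j = k`; for `i = j` or `i = k` both sides vanish. -/
theorem piMinus_anticomm {n : ℕ} (i j k : Fin n) :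
    piMinus i j * piMinus i k + piMinus i k * piMinus i j =
      ((2⁻¹ : ℂ) • (piMinus i j + piMinus i k - piMinus j k)
        + if j = k then piMinus i j else 0 : QOp n) := by
  by_cases hjk : j = k
  · subst hjk
    rw [piMinus_mul_self, piMinus_self, if_pos rfl]
    module
  rw [if_neg hjk]
  by_cases hij : i = j
  · subst hij
    simp [piMinus_self]
  by_cases hik : i = k
  · subst hik
    simp [piMinus_self, piMinus_comm]
  have h := swapOp_cycles hij hik hjk
  have h' : swapOp i j * swapOp i k =
    (swapOp i j + swapOp i k + swapOp j k - 1 : QOp n) - swapOp i k * swapOp i j :=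
    eq_sub_of_add_eq h
  simp only [piMinus, smul_mul_assoc, mul_smul_comm, sub_mul, mul_sub, one_mul, mul_one, h']
  module

/-! ### The exchange Hamiltonian and its square -/

/-- Twice the exchange Hamiltonian `∑_{i<j} piMinus i j`: the sum of `piMinus i j` over all ordered
pairs, where the diagonal terms vanish. -/
def exch (n : ℕ) : QOp n := ∑ i : Fin n, ∑ j : Fin n, piMinus i j

theorem sum_lt_piMinus (n : ℕ) :
    ∑ i : Fin n, ∑ j ∈ Finset.univ.filter (fun j => i < j), piMinus i j
      = (2⁻¹ : ℂ) • exch n := by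
  have h : exch n = (∑ i : Fin n, ∑ j ∈ Finset.univ.filter (fun j => i < j), piMinus i j) +
      ∑ i : Fin n, ∑ j ∈ Finset.univ.filter (fun j => i < j), piMinus i j := by
    have hc : ∑ i : Fin n, ∑ j : Fin n, (if i < j then piMinus i j else 0 : QOp n) =
        ∑ i : Fin n, ∑ j : Fin n, if j < i then piMinus j i else 0 := Finset.sum_comm
    simp only [Finset.sum_filter]
    nth_rw 2 [hc]
    rw [← Finset.sum_add_distrib, exch]
    refine Finset.sum_congr rfl fun i _ => ?_
    rw [← Finset.sum_add_distrib]
    refine Finset.sum_congr rfl fun j _ => ?_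
    rcases lt_trichotomy i j with h | rfl | h
    · simp [h, h.not_gt]
    · simp [piMinus_self]
    · simp [h, h.not_gt, piMinus_comm i j]
  rw [h]
  module

theorem exch_posSemidef (n : ℕ) : (exch n).PosSemidef :=
  Matrix.posSemidef_sum _ fun _ _ => Matrix.posSemidef_sum _ fun _ _ => piMinus_posSemidef _ _

/-- The sum of all products of projectors sharing their first site, obtained by summing
`piMinus_anticomm` over all triples. The terms with `j = k` are included and account for the
summand `1 / 2`. -/
theorem sum_star (n : ℕ) :
    ∑ i : Fin n, ∑ j : Fin n, ∑ k : Fin n, (piMinus i j * piMinus i k : QOp n) =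
      ((n : ℂ) / 4 + 1 / 2) • exch n := by
  set T := ∑ i : Fin n, ∑ j : Fin n, ∑ k : Fin n, (piMinus i j * piMinus i k : QOp n) with hT
  have h1 : T = ∑ i : Fin n, ∑ j : Fin n, ∑ k : Fin n, (piMinus i k * piMinus i j : QOp n) := by
    rw [hT]
    exact Finset.sum_congr rfl fun i _ => Finset.sum_comm
  have a1 : ∑ i : Fin n, ∑ j : Fin n, ∑ _k : Fin n, (piMinus i j : QOp n) = (n : ℂ) • exch n := by
    simp [exch, Finset.smul_sum, Nat.cast_smul_eq_nsmul]
  have a2 : ∑ i : Fin n, ∑ _j : Fin n, ∑ k : Fin n, (piMinus i k : QOp n) = (n : ℂ) • exch n := by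
    simp [exch, Finset.smul_sum, Nat.cast_smul_eq_nsmul]
  have a3 : ∑ _i : Fin n, ∑ j : Fin n, ∑ k : Fin n, (piMinus j k : QOp n) = (n : ℂ) • exch n := by
    simp [exch, Finset.smul_sum, Nat.cast_smul_eq_nsmul]
  have h2 : T + T = (2⁻¹ : ℂ) • ((n : ℂ) • exch n + (n : ℂ) • exch n - (n : ℂ) • exch n)
      + exch n := by
    nth_rw 2 [h1]
    rw [hT]
    simp only [← Finset.sum_add_distrib, piMinus_anticomm]
    simp only [Finset.sum_add_distrib, Finset.sum_sub_distrib, ← Finset.smul_sum, a1, a2, a3]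
    simp [exch]
  have h3 : T = (2⁻¹ : ℂ) • (T + T) := by module
  rw [h3, h2]
  module

/-- `H² ≥ (n/2) H` for the exchange Hamiltonian `H`, written for `exch n = 2 H`. The difference is
the sum of the products of projectors on disjoint pairs. -/
theorem exch_sq_sub_posSemidef (n : ℕ) : (exch n * exch n - (n : ℂ) • exch n).PosSemidef := by
  have key : exch n * exch n - (n : ℂ) • exch n =
      ∑ i : Fin n, ∑ j : Fin n, ∑ k : Fin n, ∑ l : Fin n,
        if i ≠ k ∧ i ≠ l ∧ j ≠ k ∧ j ≠ l then (piMinus i j * piMinus k l : QOp n) else 0 := by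
    -- Inclusion-exclusion over the coincidences between the pairs `(i, j)` and `(k, l)`; it may be
    -- used for all indices because both sides vanish when `i = j` or `k = l`.
    have hpt : ∀ i j k l : Fin n,
        (if i ≠ k ∧ i ≠ l ∧ j ≠ k ∧ j ≠ l then (piMinus i j * piMinus k l : QOp n) else 0) =
        piMinus i j * piMinus k l
          - (if i = k then piMinus i j * piMinus i l else 0)
          - (if i = l then piMinus i j * piMinus i k else 0)
          - (if j = k then piMinus j i * piMinus j l else 0)
          - (if j = l then piMinus j i * piMinus j k else 0)
          + (if i = k then if j = l then piMinus i j else 0 else 0)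
          + (if i = l then if j = k then piMinus i j else 0 else 0) := by
      intro i j k l
      by_cases hij : i = j
      · subst hij; simp [piMinus_self]
      by_cases hkl : k = l
      · subst hkl
        by_cases h1 : i = k
        · subst h1
          simp [piMinus_self, Ne.symm hij]
        by_cases h2 : j = k
        · subst h2
          simp [piMinus_self, piMinus_comm j i, hij]
        simp [piMinus_self, h1, h2]
      by_cases h1 : i = k
      · subst h1
        by_cases h2 : j = l
        · subst h2
          simp [piMinus_mul_self, piMinus_comm j i, hij, Ne.symm hij]
        · simp [h2, hkl, Ne.symm hij]
      by_cases h2 : i = l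
      · subst h2
        by_cases h3 : j = k
        · subst h3
          simp [piMinus_mul_self, piMinus_comm j i, hij, Ne.symm hij]
        · simp [h1, h3, piMinus_comm k i, Ne.symm hij]
      by_cases h3 : j = k
      · subst h3
        simp [h1, h2, hkl, piMinus_comm j i]
      by_cases h4 : j = l
      · subst h4
        simp [h1, h2, h3, piMinus_comm j i, piMinus_comm k j]
      simp [h1, h2, h3, h4]
    have b0 : ∑ i : Fin n, ∑ j : Fin n, ∑ k : Fin n, ∑ l : Fin n,
        (piMinus i j * piMinus k l : QOp n) = exch n * exch n := by
      rw [exch, Finset.sum_mul]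
      refine Finset.sum_congr rfl fun i _ => ?_
      rw [Finset.sum_mul]
      refine Finset.sum_congr rfl fun j _ => ?_
      rw [Finset.mul_sum]
      refine Finset.sum_congr rfl fun k _ => ?_
      rw [Finset.mul_sum]
    have b1 := sum_star n
    have b2 := b1
    rw [Finset.sum_comm] at b2
    simp only [hpt, Finset.sum_add_distrib, Finset.sum_sub_distrib, Finset.sum_ite_irrel,
      Finset.sum_const_zero, Finset.sum_ite_eq, Finset.mem_univ, if_true, b0, b1, b2]
    rw [← exch]
    module
  rw [key]
  refine Matrix.posSemidef_sum _ fun i _ => Matrix.posSemidef_sum _ fun j _ =>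
    Matrix.posSemidef_sum _ fun k _ => Matrix.posSemidef_sum _ fun l _ => ?_
  split_ifs with h
  · exact piMinus_mul_posSemidef h.1 h.2.1 h.2.2.1 h.2.2.2
  · exact Matrix.PosSemidef.zero

/-! ### The symmetric subspace -/

theorem wt_comp {n : ℕ} (f : Fin n → Fin 2) (σ : Equiv.Perm (Fin n)) : wt (f ∘ σ) = wt f := by
  unfold wt
  exact Finset.card_equiv σ (by simp)

theorem exists_perm_of_wt_eq {n : ℕ} {f g : Fin n → Fin 2} (h : wt f = wt g) :
    ∃ σ : Equiv.Perm (Fin n), g = f ∘ σ := by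
  obtain ⟨σ, hσ⟩ := Equiv.Perm.exists_map_finset_eq _ _ h
  refine ⟨σ⁻¹, funext fun x => ?_⟩
  have h1 : f (σ⁻¹ x) = 1 ↔ g x = 1 := by
    have := congrArg (x ∈ ·) hσ
    simp only [Finset.mem_map_equiv, Finset.mem_filter, Finset.mem_univ, true_and] at this
    exact this.to_iff
  simp only [Function.comp_apply]
  omega

theorem wt_le {n : ℕ} (f : Fin n → Fin 2) : wt f ≤ n := by
  simpa [wt] using Finset.card_filter_le (Finset.univ : Finset (Fin n)) (fun i => f i = 1)

theorem card_wt_eq (n k : ℕ) :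
    (Finset.univ.filter (fun f : Fin n → Fin 2 => wt f = k)).card = n.choose k := by
  have h := Finset.card_powersetCard k (Finset.univ : Finset (Fin n))
  rw [Finset.card_univ, Fintype.card_fin] at h
  rw [← h]
  refine Finset.card_nbij' (fun f => Finset.univ.filter (fun i => f i = 1))
    (fun s i => if i ∈ s then 1 else 0) ?_ ?_ ?_ ?_
  · intro f hf
    rw [Finset.mem_coe, Finset.mem_filter] at hf
    rw [Finset.mem_coe, Finset.mem_powersetCard]
    exact ⟨Finset.subset_univ _, hf.2⟩
  · intro s hs
    rw [Finset.mem_coe, Finset.mem_powersetCard] at hs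
    rw [Finset.mem_coe, Finset.mem_filter]
    simpa [wt] using hs.2
  · intro f _
    funext i
    by_cases h : f i = 1
    · simp [h]
    · have : f i = 0 := by omega
      simp [this]
  · intro s _
    ext i
    simp

/-- Vectors that only depend on the Hamming weight are fixed by `symProj`. -/
theorem symProj_mulVec {n : ℕ} {v : (Fin n → Fin 2) → ℂ} (hv : ∀ f g, wt f = wt g → v f = v g) :
    symProj n *ᵥ v = v := by
  funext f
  have h1 : ∀ g, symProj n f g * v g =
      if wt g = wt f then ((n.choose (wt f) : ℂ))⁻¹ * v f else 0 := by
    intro g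
    by_cases h : wt f = wt g
    · simp [symProj, h, hv f g h]
    · simp [symProj, h, Ne.symm h]
  have h2 : (n.choose (wt f) : ℂ) ≠ 0 :=
    Nat.cast_ne_zero.mpr (Nat.choose_pos (wt_le f)).ne'
  simp only [Matrix.mulVec, dotProduct, h1]
  rw [← Finset.sum_filter, Finset.sum_const, card_wt_eq, nsmul_eq_mul, ← mul_assoc,
    mul_inv_cancel₀ h2, one_mul]

theorem symProj_mul_self (n : ℕ) : symProj n * symProj n = symProj n := by
  ext f g
  have := congrFun (symProj_mulVec (n := n) (v := fun f => symProj n f g)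
    (fun a b h => by simp [symProj, h])) f
  simpa [Matrix.mulVec, dotProduct, Matrix.mul_apply] using this

theorem symProj_conjTranspose (n : ℕ) : (symProj n)ᴴ = symProj n := by
  ext f g
  by_cases h : wt f = wt g
  · simp [symProj, h]
  · simp [symProj, h, Ne.symm h]

theorem symProj_mul_piMinus {n : ℕ} (i j : Fin n) : symProj n * piMinus i j = 0 := by
  have h : symProj n * swapOp i j = symProj n := by
    ext f g
    have h1 : ∀ x : Fin n → Fin 2, g = x ∘ Equiv.swap i j ↔ x = g ∘ Equiv.swap i j := by
      intro x
      constructor <;> rintro rfl <;> simp [Function.comp_assoc, ← Equiv.Perm.coe_mul]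
    simp only [Matrix.mul_apply, swapOp, h1, mul_ite, mul_one, mul_zero]
    rw [Finset.sum_ite_eq']
    simp [symProj, wt_comp]
  simp [piMinus, mul_sub, h]

theorem symProj_mul_exch (n : ℕ) : symProj n * exch n = 0 := by
  simp [exch, Finset.mul_sum, symProj_mul_piMinus]

/-- The kernel of the exchange Hamiltonian is the symmetric subspace: a zero-energy vector is
annihilated by every projector, hence invariant under all transpositions. -/
theorem symProj_mulVec_of_exch_mulVec {n : ℕ} {v : (Fin n → Fin 2) → ℂ}
    (hv : exch n *ᵥ v = 0) : symProj n *ᵥ v = v := by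
  have h0 : ∑ i : Fin n, ∑ j : Fin n, star v ⬝ᵥ (piMinus i j *ᵥ v) = 0 := by
    have : star v ⬝ᵥ (exch n *ᵥ v) = 0 := by rw [hv, dotProduct_zero]
    simpa [exch, Matrix.sum_mulVec, dotProduct_sum] using this
  have hpi : ∀ i j : Fin n, piMinus i j *ᵥ v = 0 := by
    intro i j
    have hnn : ∀ i j : Fin n, 0 ≤ star v ⬝ᵥ (piMinus i j *ᵥ v) :=
      fun i j => (piMinus_posSemidef i j).dotProduct_mulVec_nonneg v
    have h1 := (Finset.sum_eq_zero_iff_of_nonneg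
      (fun i _ => Finset.sum_nonneg fun j _ => hnn i j)).1 h0 i (Finset.mem_univ _)
    have h2 := (Finset.sum_eq_zero_iff_of_nonneg (fun j _ => hnn i j)).1 h1 j (Finset.mem_univ _)
    exact ((piMinus_posSemidef i j).dotProduct_mulVec_zero_iff v).1 h2
  have hsw : ∀ (i j : Fin n) f, v (f ∘ Equiv.swap i j) = v f := by
    intro i j f
    have h1 := congrFun (hpi i j) f
    have h2 : (swapOp i j *ᵥ v) f = v (f ∘ Equiv.swap i j) := by
      simp [Matrix.mulVec, dotProduct, swapOp]
    rw [piMinus, Matrix.smul_mulVec, Matrix.sub_mulVec, Matrix.one_mulVec] at h1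
    simp only [Pi.smul_apply, Pi.sub_apply, h2, Pi.zero_apply, smul_eq_mul] at h1
    linear_combination -2 * h1
  have hperm : ∀ (σ : Equiv.Perm (Fin n)) f, v (f ∘ σ) = v f := by
    intro σ
    induction σ using Equiv.Perm.swap_induction_on with
    | one => simp
    | swap_mul τ i j _ ih =>
      intro f
      rw [Equiv.Perm.coe_mul, ← Function.comp_assoc, ih, hsw]
  refine symProj_mulVec fun f g h => ?_
  obtain ⟨σ, rfl⟩ := exists_perm_of_wt_eq h
  exact (hperm σ f).symm

/-- **Spectral gap of the exchange term:**
`∑_{i<j} Π⁻_{ij} ⪰ (n/2)·(1 − Π_sym)`. -/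
theorem sum_piMinus_gap {n : ℕ} (hn : 1 ≤ n) :
    ((∑ i : Fin n, ∑ j ∈ Finset.univ.filter (fun j => i < j), piMinus i j) -
        ((n : ℂ) / 2) • ((1 : QOp n) - symProj n)).PosSemidef := by
  rw [sum_lt_piMinus]
  have hK : ((2⁻¹ : ℂ) • exch n - ((n : ℂ) / 2) • ((1 : QOp n) - symProj n)).IsHermitian := by
    have hA : (exch n)ᴴ = exch n := (exch_posSemidef n).isHermitian
    simp [Matrix.IsHermitian, hA, symProj_conjTranspose]
  rw [hK.posSemidef_iff_eigenvalues_nonneg]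
  intro a
  set t : ℝ := hK.eigenvalues a with ht
  set v : (Fin n → Fin 2) → ℂ := ⇑(hK.eigenvectorBasis a) with hvdef
  have hv0 : v ≠ 0 := by
    intro h
    exact hK.eigenvectorBasis.orthonormal.ne_zero a (by ext x; exact congrFun h x)
  have hev := hK.mulVec_eigenvectorBasis a
  rw [← ht, ← hvdef] at hev
  by_contra hneg
  have hneg : t < 0 := by simpa using hneg
  have hev' : (2⁻¹ : ℂ) • (exch n *ᵥ v) - ((n : ℂ) / 2) • (v - symProj n *ᵥ v) = (t : ℂ) • v := by
    simpa [Matrix.sub_mulVec, Matrix.smul_mulVec] using hev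
  have hPv : symProj n *ᵥ v = 0 := by
    have h := congrArg (symProj n *ᵥ ·) hev'
    simp only [Matrix.mulVec_sub, Matrix.mulVec_smul, Matrix.mulVec_mulVec, symProj_mul_exch,
      symProj_mul_self, Matrix.zero_mulVec, sub_self, smul_zero] at h
    have ht0 : (t : ℂ) ≠ 0 := by exact_mod_cast hneg.ne
    exact (smul_eq_zero.1 h.symm).resolve_left ht0
  have hAv : exch n *ᵥ v = ((2 * t + n : ℝ) : ℂ) • v := by
    rw [hPv, sub_zero] at hev'
    have h1 : exch n *ᵥ v = (2 : ℂ) • ((2⁻¹ : ℂ) • (exch n *ᵥ v) - ((n : ℂ) / 2) • v)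
        + (n : ℂ) • v := by module
    rw [h1, hev']
    push_cast
    module
  set μ : ℝ := 2 * t + n with hμ
  -- Testing `exch n ≥ 0` and `exch n ^ 2 ≥ n • exch n` on `v` gives `μ ≥ 0` and `μ (μ - n) ≥ 0`,
  -- while `μ < n` because `t < 0`; hence `μ = 0`.
  have hpos : 0 < star v ⬝ᵥ v := dotProduct_star_self_pos_iff.2 hv0
  have h1 := (exch_posSemidef n).dotProduct_mulVec_nonneg v
  have h2 := (exch_sq_sub_posSemidef n).dotProduct_mulVec_nonneg v
  rw [Matrix.sub_mulVec, Matrix.smul_mulVec, ← Matrix.mulVec_mulVec, hAv, Matrix.mulVec_smul,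
    hAv, smul_smul, smul_smul, ← sub_smul, dotProduct_smul, smul_eq_mul] at h2
  rw [hAv, dotProduct_smul, smul_eq_mul] at h1
  have h1' : 0 ≤ μ := by
    by_contra hlt
    have hlt' : ((μ : ℝ) : ℂ) < 0 := by exact_mod_cast not_le.1 hlt
    exact (mul_neg_of_neg_of_pos hlt' hpos).not_ge h1
  have h2' : 0 ≤ μ * μ - n * μ := by
    by_contra hlt
    have hlt' : ((μ * μ - n * μ : ℝ) : ℂ) < 0 := by exact_mod_cast not_le.1 hlt
    push_cast at hlt'
    exact (mul_neg_of_neg_of_pos hlt' hpos).not_ge h2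
  have hμ0 : μ = 0 := by nlinarith
  rw [hμ0, Complex.ofReal_zero, zero_smul] at hAv
  exact hv0 ((symProj_mulVec_of_exch_mulVec hAv).symm.trans hPv)

end
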